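/- arXiv:1804.05141 — 2 statements merged into one kernel-verified Lean document; each statement's English description precedes it below -/
import Mathlib

section
/- Let F be a finite field with q elements, let k be a natural number, let B \subseteq F \setminus \{0\} be a set of m pairwise distinct nonzero elements with m \le k, let v : B \to F be any assignment of share values, and let s \in F be any secret. Then the number of polynomials p over F of degree at most k satisfying p(0) = s and p(b) = v(b) for all b \in B equals q^{k - m}. In particular this count does not depend on s. -/
/-- Counting Shamir sharings: over a finite field with `q` elements, for any set `B` of
`m ≤ k` pairwise distinct nonzero points, any share values `v` on `B`, and any secret `s`,
the number of polynomials `p` of degree at most `k` with `p(0) = s` and `p(b) = v(b)` for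
all `b ∈ B` equals `q ^ (k - m)`; in particular it does not depend on `s`. -/
theorem shamir_sharing_count
    (F : Type*) [Field F] [Fintype F] (q k : ℕ) (hq : Fintype.card F = q)
    (B : Finset F) (hB0 : (0 : F) ∉ B) (hBk : B.card ≤ k)
    (v : F → F) (s : F) :
    Nat.card {p : Polynomial F //
      p.degree ≤ (k : WithBot ℕ) ∧ p.eval 0 = s ∧ ∀ b ∈ B, p.eval b = v b} =
      q ^ (k - B.card) := by
  classical
  set T : Finset F := insert 0 B with hT
  have hTc : T.card = B.card + 1 := Finset.card_insert_of_notMem hB0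
  set w : F → F := fun x => if x = 0 then s else v x with hw
  have hinj : Set.InjOn (id : F → F) (T : Set F) := Function.injective_id.injOn
  set N := Lagrange.nodal T (id : F → F) with hN
  set I := Lagrange.interpolate T (id : F → F) w with hI
  have hNm : N.Monic := Lagrange.nodal_monic
  have hNd : N.degree = ((B.card + 1 : ℕ) : WithBot ℕ) := by
    rw [hN, Lagrange.degree_nodal, hTc]
  have hId : I.degree < ((B.card + 1 : ℕ) : WithBot ℕ) := by
    rw [← hTc]; exact Lagrange.degree_interpolate_lt w hinj
  have hNe : ∀ x ∈ T, N.eval x = 0 := fun x hx =>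
    Lagrange.eval_nodal_at_node (v := (id : F → F)) hx
  have hIe : ∀ x ∈ T, I.eval x = w x := fun x hx =>
    Lagrange.eval_interpolate_at_node (v := (id : F → F)) w hinj hx
  have hcond : ∀ p : Polynomial F, (p.eval 0 = s ∧ ∀ b ∈ B, p.eval b = v b) ↔
      ∀ x ∈ T, p.eval x = w x := by
    intro p
    rw [hT, Finset.forall_mem_insert]
    refine and_congr (by simp [hw]) (forall₂_congr fun b hb => ?_)
    have : b ≠ 0 := fun h => hB0 (h ▸ hb)
    simp [hw, this]
  have hdeg : ∀ g : Polynomial F, g.degree < ((k - B.card : ℕ) : WithBot ℕ) ↔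
      (N * g).degree ≤ (k : WithBot ℕ) := by
    intro g
    by_cases hg : g = 0
    · simp [hg]
    · rw [Polynomial.degree_mul, hNd, Polynomial.degree_eq_natDegree hg]
      norm_cast
      omega
  have hIk : I.degree ≤ (k : WithBot ℕ) :=
    by
      refine Order.le_of_lt_succ (hId.trans_le ?_)
      rw [show Order.succ (k : WithBot ℕ) = ((k + 1 : ℕ) : WithBot ℕ) from rfl]
      exact_mod_cast Nat.succ_le_succ hBk
  let f : Polynomial.degreeLT F (k - B.card) → {p : Polynomial F //
      p.degree ≤ (k : WithBot ℕ) ∧ p.eval 0 = s ∧ ∀ b ∈ B, p.eval b = v b} := fun g =>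
    ⟨I + N * g.1, (Polynomial.degree_add_le _ _).trans
      (max_le hIk ((hdeg _).1 (Polynomial.mem_degreeLT.1 g.2))),
      (hcond _).2 fun x hx => by simp [hNe x hx, hIe x hx]⟩
  have hf : Function.Bijective f := by
    constructor
    · intro a b hab
      have h := congrArg Subtype.val hab
      exact Subtype.ext (mul_left_cancel₀ hNm.ne_zero (add_left_cancel h))
    · rintro ⟨p, hp, hpe⟩
      have hpe' := (hcond p).1 hpe
      have hmod : p %ₘ N = I := by
        refine Lagrange.eq_interpolate_of_eval_eq w hinj ?_ ?_
        · rw [hTc, ← hNd]; exact Polynomial.degree_modByMonic_lt _ hNm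
        · intro x hx
          have h := congrArg (Polynomial.eval x) (Polynomial.modByMonic_add_div p N)
          simpa [hNe x hx, hpe' x hx] using h
      have hdec : I + N * (p /ₘ N) = p := by
        rw [← hmod]; exact Polynomial.modByMonic_add_div p N
      refine ⟨⟨p /ₘ N, Polynomial.mem_degreeLT.2 ((hdeg _).2 ?_)⟩, Subtype.ext hdec⟩
      rw [show N * (p /ₘ N) = p - I from eq_sub_of_add_eq' hdec]
      exact (Polynomial.degree_sub_le _ _).trans (max_le hp hIk)
  rw [← Nat.card_congr (Equiv.ofBijective f hf),
    Nat.card_congr (Polynomial.degreeLTEquiv F (k - B.card)).toEquiv]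
  simp [hq]
end

section
/- Let F be a finite field with q elements, let k be a natural number, let B \subseteq F \setminus \{0\} be a set of at most k pairwise distinct nonzero elements, and let v : B \to F be any assignment of share values. Then for any two secrets s, s' \in F, the set of polynomials p of degree at most k with p(0) = s and p(b) = v(b) for all b \in B has the same cardinality as the set of polynomials p' of degree at most k with p'(0) = s' and p'(b) = v(b) for all b \in B. -/
/-- Perfect secrecy of Shamir sharing: over a finite field with `q` elements, for any set
`B` of at most `k` pairwise distinct nonzero points and any share values `v` on `B`, the
polynomials of degree at most `k` consistent with the shares and secret `s` are equinumerous
with those consistent with the shares and secret `s'`, for any two secrets `s, s'`. -/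
theorem shamir_perfect_secrecy
    (F : Type*) [Field F] [Fintype F] (q k : ℕ) (hq : Fintype.card F = q)
    (B : Finset F) (hB0 : (0 : F) ∉ B) (hBk : B.card ≤ k)
    (v : F → F) (s s' : F) :
    Nat.card {p : Polynomial F //
      p.degree ≤ (k : WithBot ℕ) ∧ p.eval 0 = s ∧ ∀ b ∈ B, p.eval b = v b} =
    Nat.card {p : Polynomial F //
      p.degree ≤ (k : WithBot ℕ) ∧ p.eval 0 = s' ∧ ∀ b ∈ B, p.eval b = v b} := by
  have hP0 : (∏ b ∈ B, (Polynomial.X - Polynomial.C b)).eval 0 ≠ 0 := by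
    rw [Polynomial.eval_prod, Finset.prod_ne_zero_iff]
    intro b hb h
    simp at h
    exact hB0 (h ▸ hb)
  obtain ⟨r, hr, hr0, hrB⟩ : ∃ r : Polynomial F, r.degree ≤ (k : WithBot ℕ) ∧
      r.eval 0 = s' - s ∧ ∀ b ∈ B, r.eval b = 0 := by
    refine ⟨Polynomial.C ((s' - s) / (∏ b ∈ B, (Polynomial.X - Polynomial.C b)).eval 0) *
      ∏ b ∈ B, (Polynomial.X - Polynomial.C b), ?_, ?_, ?_⟩
    · rw [← Polynomial.smul_eq_C_mul]
      refine (Polynomial.degree_smul_le _ _).trans ?_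
      rw [Polynomial.degree_prod]
      simpa using hBk
    · rw [Polynomial.eval_mul, Polynomial.eval_C, div_mul_cancel₀ _ hP0]
    · intro b hb
      have h : (∏ b ∈ B, (Polynomial.X - Polynomial.C b)).eval b = 0 := by
        rw [Polynomial.eval_prod]
        exact Finset.prod_eq_zero hb (by simp)
      rw [Polynomial.eval_mul, h, mul_zero]
  refine Nat.card_congr ((Equiv.addRight r).subtypeEquiv fun p => ?_)
  simp only [Equiv.coe_addRight, Polynomial.eval_add]
  constructor
  · rintro ⟨h1, h2, h3⟩
    refine ⟨(Polynomial.degree_add_le _ _).trans (max_le h1 hr), by rw [h2, hr0]; ring, ?_⟩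
    intro b hb
    rw [h3 b hb, hrB b hb, add_zero]
  · rintro ⟨h1, h2, h3⟩
    refine ⟨?_, ?_, ?_⟩
    · have h := (Polynomial.degree_sub_le (p + r) r).trans (max_le h1 hr)
      simpa using h
    · rw [hr0] at h2
      linear_combination h2
    · intro b hb
      have h := h3 b hb
      rwa [hrB b hb, add_zero] at h
end
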